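/- Application repainting: given derivations Γ ⊢_k t : M →_c L and Δ ⊢_l u : N with either M ⊑^−_d N or N ⊑^+_d M, for any application color c₂ there exist a derivation Γ'⊎Δ' ⊢_m t ·_{c₂} u : L' and d' with 0 ≤ d' ≤ d such that (Γ'⊎Δ', L') ⊑^+_{d'} (Γ⊎Δ, L) and m ≤ k + l + δ̄(c,c₂) + d − d', where δ̄(c,c₂) = 0 if c = c₂ and 1 otherwise. -/

import Mathlib

/-!
A term in a derivable judgment absorbs every *negative* whitening of that judgment, possibly after
a further *positive* one (`repaintL`); the sum of interaction cost and whitening cost does not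
increase. This is proved by induction on the term, and the application case is the heart of it
(`repaint_app`).

There, function and argument have to agree on a multi type `P`. Repainting the function towards
`P` may whiten `P` negatively, and repainting the argument may whiten it positively. Since
whitenings of opposite polarities touch disjoint sets of arrows, they can be joined
(`WhiterM.diamond`), and the two derivations are repainted again towards the join. Each
nontrivial whitening removes black arrows (`WhiterM.blacks_eq`), so this exchange stops. The
induction has to be on terms rather than on derivations, because the derivations being repainted
change from one round to the next. Whitening the arrow type of the function at its root changes
the cost of the application by at most one, which the unit cost of that whitening pays for.

Application repainting is `repaint_app` with `P` the whiter of the two given multi types.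
-/

set_option autoImplicit false

abbrev Var := ℕ

/-- Colors: white (○) and black (●). -/
inductive Color where
  | white
  | black
deriving DecidableEq

/-- The opposite color. -/
def Color.flip : Color → Color
  | .white => .black
  | .black => .white

/-- Checkers terms (considered modulo α-conversion). -/
inductive Tm where
  | var : Var → Tm
  | lam : Color → Var → Tm → Tm
  | app : Color → Tm → Tm → Tm

/-- Substitution t{u/x} (capture avoided by the modulo-α convention). -/
def Tm.subst (x : Var) (u : Tm) : Tm → Tm
  | .var y => if y = x then u else .var y
  | .lam c y t => if y = x then .lam c y t else .lam c y (Tm.subst x u t)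
  | .app c t s => .app c (Tm.subst x u t) (Tm.subst x u s)

/-- Silent root step: (λ_c x. t) ·_c u ↦τ t{u/x}. -/
inductive RootSilent : Tm → Tm → Prop where
  | mk (c : Color) (x : Var) (t u : Tm) :
      RootSilent (.app c (.lam c x t) u) (Tm.subst x u t)

/-- Interaction root step: (λ_c x. t) ·_{c⊥} u ↦ι t{u/x}. -/
inductive RootInter : Tm → Tm → Prop where
  | mk (c : Color) (x : Var) (t u : Tm) :
      RootInter (.app c.flip (.lam c x t) u) (Tm.subst x u t)

/-- Closure of a relation under applicative contexts ⟨·⟩ ·_{d₁} t₁ ⋯ ·_{dₘ} tₘ. -/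
inductive AppClos (R : Tm → Tm → Prop) : Tm → Tm → Prop where
  | root {t u : Tm} : R t u → AppClos R t u
  | app {t u : Tm} (c : Color) (s : Tm) : AppClos R t u → AppClos R (.app c t s) (.app c u s)

/-- Closure of a relation under head contexts λ_{c₁}x₁…λ_{cₙ}xₙ.⟨·⟩ ·_{d₁} t₁ ⋯ ·_{dₘ} tₘ. -/
inductive HeadClos (R : Tm → Tm → Prop) : Tm → Tm → Prop where
  | base {t u : Tm} : AppClos R t u → HeadClos R t u
  | lam {t u : Tm} (c : Color) (x : Var) : HeadClos R t u → HeadClos R (.lam c x t) (.lam c x u)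

/-- Silent head step →hτ. -/
def HStepSilent : Tm → Tm → Prop := HeadClos RootSilent
/-- Interaction head step →hι. -/
def HStepInter : Tm → Tm → Prop := HeadClos RootInter
/-- Checkers head step →hch = →hτ ∪ →hι. -/
def HStep (t u : Tm) : Prop := HStepSilent t u ∨ HStepInter t u

/-- t ⇓ι^k : the head-reduction sequence from t reaches a →hch-normal form
and contains exactly k interaction steps. -/
inductive Evals : Tm → ℕ → Prop where
  | nf {t : Tm} : (∀ u, ¬ HStep t u) → Evals t 0
  | silent {t u : Tm} {k : ℕ} : HStepSilent t u → Evals u k → Evals t k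
  | inter {t u : Tm} {k : ℕ} : HStepInter t u → Evals u k → Evals t (k + 1)

/-- Linear types: atoms and colored arrows M →_c L (multi types as lists). -/
inductive LinTy where
  | atom : ℕ → LinTy
  | arr : List LinTy → Color → LinTy → LinTy

/-- Multi types: finite multisets [L₁,…,Lₙ] of linear types (represented as lists). -/
abbrev MTy := List LinTy

/-- Either a linear type or a multi type. -/
inductive GTy where
  | lin : LinTy → GTy
  | multi : MTy → GTy

/-- Type environments. -/
abbrev Env := Var → MTy

/-- Pointwise (multiset) union Γ ⊎ Δ of environments. -/
def Env.union (Γ Δ : Env) : Env := fun x => Γ x ++ Δ x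
/-- The empty environment. -/
def Env.empty : Env := fun _ => []
/-- The environment x : M. -/
def Env.single (x : Var) (M : MTy) : Env := fun y => if y = x then M else []
/-- Environment update: (Γ, x:M) when Γ x is empty. -/
def Env.update (Γ : Env) (x : Var) (M : MTy) : Env := fun y => if y = x then M else Γ y

/-- Dual Kronecker delta δ̄(c,d): 0 if the colors agree, 1 otherwise. -/
def costOf (c d : Color) : ℕ := if c = d then 0 else 1

/-- Typing judgments Γ ⊢ₖ t : T of the checkers multi type system,
additionally indexed by the applicative size (number of @ rules) of the derivation. -/
inductive Ty : Env → ℕ → Tm → GTy → ℕ → Prop where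
  | ax (x : Var) (L : LinTy) :
      Ty (Env.single x [L]) 0 (.var x) (.lin L) 0
  | many_nil (t : Tm) :
      Ty Env.empty 0 t (.multi []) 0
  | many_cons {Γ Δ : Env} {k k' : ℕ} {t : Tm} {L : LinTy} {M : MTy} {s s' : ℕ} :
      Ty Γ k t (.lin L) s → Ty Δ k' t (.multi M) s' →
      Ty (Env.union Γ Δ) (k + k') t (.multi (L :: M)) (s + s')
  | lam {Γ : Env} {k : ℕ} {t : Tm} {L : LinTy} {s : ℕ} (c : Color) (x : Var) :
      Ty Γ k t (.lin L) s →
      Ty (Env.update Γ x []) k (.lam c x t) (.lin (.arr (Γ x) c L)) s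
  | app {Γ Δ : Env} {k₁ k₂ : ℕ} {t u : Tm} {M : MTy} {c : Color} {L : LinTy} {s₁ s₂ : ℕ}
      (d : Color) :
      Ty Γ k₁ t (.lin (.arr M c L)) s₁ → Ty Δ k₂ u (.multi M) s₂ →
      Ty (Env.union Γ Δ) (k₁ + k₂ + costOf c d) (.app d t u) (.lin L) (s₁ + s₂ + 1)

/-- Γ ⊢ₖ t : T is derivable (for some derivation/size). -/
def HasTy (Γ : Env) (k : ℕ) (t : Tm) (T : GTy) : Prop := ∃ s, Ty Γ k t T s

/-- Polarities. -/
inductive Pol where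
  | pos
  | neg
deriving DecidableEq

/-- The opposite polarity. -/
def Pol.flip : Pol → Pol
  | .pos => .neg
  | .neg => .pos

mutual
  /-- Polarized whitening on linear types: `WhiterL p k L' L` means L' ⊑^p_k L. -/
  inductive WhiterL : Pol → ℕ → LinTy → LinTy → Prop where
    | atom (p : Pol) (a : ℕ) : WhiterL p 0 (.atom a) (.atom a)
    | whiten {k₁ k₂ : ℕ} {M' M : List LinTy} {L' L : LinTy} :
        WhiterM .neg k₁ M' M → WhiterL .pos k₂ L' L →
        WhiterL .pos (k₁ + k₂ + 1) (.arr M' .white L') (.arr M .black L)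
    | congr {p : Pol} {k₁ k₂ : ℕ} {M' M : List LinTy} {L' L : LinTy} (c : Color) :
        WhiterM p.flip k₁ M' M → WhiterL p k₂ L' L →
        WhiterL p (k₁ + k₂) (.arr M' c L') (.arr M c L)

  /-- Polarized whitening on multi types (componentwise, summing the costs). -/
  inductive WhiterM : Pol → ℕ → List LinTy → List LinTy → Prop where
    | nil (p : Pol) : WhiterM p 0 [] []
    | cons {p : Pol} {k k' : ℕ} {L' L : LinTy} {M' M : List LinTy} :
        WhiterL p k L' L → WhiterM p k' M' M →
        WhiterM p (k + k') (L' :: M') (L :: M)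
end

/-- Polarized whitening on environments (pointwise, with finitely many nonzero costs). -/
def WhiterE (p : Pol) (k : ℕ) (Γ' Γ : Env) : Prop :=
  ∃ f : Var →₀ ℕ, (∀ x, WhiterM p (f x) (Γ' x) (Γ x)) ∧ k = f.sum fun _ n => n

/-- Polarized whitening on pairs: (Γ',L') ⊑^p_k (Γ,L) iff Γ' ⊑^{p°}_{k₁} Γ and L' ⊑^p_{k₂} L
with k = k₁ + k₂. -/
def WhiterP (p : Pol) (k : ℕ) (Γ' : Env) (L' : LinTy) (Γ : Env) (L : LinTy) : Prop :=
  ∃ k₁ k₂, k = k₁ + k₂ ∧ WhiterE p.flip k₁ Γ' Γ ∧ WhiterL p k₂ L' L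

/-- Ordinary λ-terms. -/
inductive LTm where
  | var : Var → LTm
  | lam : Var → LTm → LTm
  | app : LTm → LTm → LTm

/-- Substitution on λ-terms. -/
def LTm.subst (x : Var) (u : LTm) : LTm → LTm
  | .var y => if y = x then u else .var y
  | .lam y t => if y = x then .lam y t else .lam y (LTm.subst x u t)
  | .app t s => .app (LTm.subst x u t) (LTm.subst x u s)

/-- Root β-step. -/
inductive LRoot : LTm → LTm → Prop where
  | mk (x : Var) (t u : LTm) : LRoot (.app (.lam x t) u) (LTm.subst x u t)

inductive LAppClos (R : LTm → LTm → Prop) : LTm → LTm → Prop where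
  | root {t u : LTm} : R t u → LAppClos R t u
  | app {t u : LTm} (s : LTm) : LAppClos R t u → LAppClos R (.app t s) (.app u s)

inductive LHeadClos (R : LTm → LTm → Prop) : LTm → LTm → Prop where
  | base {t u : LTm} : LAppClos R t u → LHeadClos R t u
  | lam {t u : LTm} (x : Var) : LHeadClos R t u → LHeadClos R (.lam x t) (.lam x u)

/-- Head β-reduction step on λ-terms. -/
def LHStep : LTm → LTm → Prop := LHeadClos LRoot
/-- Head normal forms. -/
def LIsHnf (t : LTm) : Prop := ∀ u, ¬ LHStep t u
/-- Many-step head reduction. -/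
def HeadReduces (t h : LTm) : Prop := Relation.ReflTransGen LHStep t h
/-- t has a head normal form. -/
def HasHnf (t : LTm) : Prop := ∃ h, HeadReduces t h ∧ LIsHnf h

/-- λx₁…xₙ.t -/
def lams : List Var → LTm → LTm
  | [], t => t
  | x :: xs, t => .lam x (lams xs t)

/-- t u₁ ⋯ uₖ -/
def apps : LTm → List LTm → LTm
  | t, [] => t
  | t, u :: us => apps (.app t u) us

/-- x occurs free in t. -/
def LFree (x : Var) : LTm → Prop
  | .var y => y = x
  | .lam y t => y ≠ x ∧ LFree x t
  | .app t u => LFree x t ∨ LFree x u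

/-- The (Hη_red) clause: t head-reduces to λx₁…x_{n+p}. y t₁…t_{k+p},
u head-reduces to λx₁…xₙ. y u₁…u_k, with R tᵢ uᵢ (i ≤ k), R t_{k+i} x_{n+i},
and the extra abstracted variables fresh for y u₁…u_k. -/
def HEtaL (R : LTm → LTm → Prop) (t u : LTm) : Prop :=
  ∃ (xs zs : List Var) (y : Var) (ts ts' us : List LTm),
    HeadReduces t (lams (xs ++ zs) (apps (.var y) (ts ++ ts'))) ∧
    HeadReduces u (lams xs (apps (.var y) us)) ∧
    List.Forall₂ R ts us ∧
    List.Forall₂ (fun a z => R a (.var z)) ts' zs ∧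
    (∀ z ∈ zs, ¬ LFree z (apps (.var y) us))

/-- The clause symmetric to (Hη_red), allowing η-expansions on the u side. -/
def HEtaR (R : LTm → LTm → Prop) (t u : LTm) : Prop :=
  ∃ (xs zs : List Var) (y : Var) (ts us us' : List LTm),
    HeadReduces t (lams xs (apps (.var y) ts)) ∧
    HeadReduces u (lams (xs ++ zs) (apps (.var y) (us ++ us'))) ∧
    List.Forall₂ R ts us ∧
    List.Forall₂ (fun z a => R (.var z) a) zs us' ∧
    (∀ z ∈ zs, ¬ LFree z (apps (.var y) ts))

/-- The Böhm preorder up to η-reductions ⊑η↓: the largest relation closed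
under (bot) and (Hη_red), defined as a greatest fixed point. -/
def EtaRedLe (t u : LTm) : Prop :=
  ∃ R : LTm → LTm → Prop,
    (∀ a b, R a b → (¬ HasHnf a) ∨ HEtaL R a b) ∧ R t u

/-- The Böhm preorder up to possibly infinite η-conversion ⊑Bη: the largest
relation closed under (bot), (Hη_red) and its symmetric clause. -/
def BohmEtaLe (t u : LTm) : Prop :=
  ∃ R : LTm → LTm → Prop,
    (∀ a b, R a b → (¬ HasHnf a) ∨ HEtaL R a b ∨ HEtaR R a b) ∧ R t u

/-- The c-painting of an ordinary λ-term. -/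
def paint (c : Color) : LTm → Tm
  | .var x => .var x
  | .lam x t => .lam c x (paint c t)
  | .app t u => .app c (paint c t) (paint c u)

/-- λ-calculus contexts. -/
inductive LCtx where
  | hole : LCtx
  | lam : Var → LCtx → LCtx
  | appL : LCtx → LTm → LCtx
  | appR : LTm → LCtx → LCtx

/-- Paint a λ-calculus context with color c (hole unchanged) and fill its hole
with a checkers term. -/
def LCtx.paintFill (c : Color) : LCtx → Tm → Tm
  | .hole, s => s
  | .lam x C, s => .lam c x (C.paintFill c s)
  | .appL C u, s => .app c (C.paintFill c s) (paint c u)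
  | .appR t C, s => .app c (paint c t) (C.paintFill c s)

/-- Checkers contexts. -/
inductive Ctx where
  | hole : Ctx
  | lam : Color → Var → Ctx → Ctx
  | appL : Color → Ctx → Tm → Ctx
  | appR : Color → Tm → Ctx → Ctx

/-- Filling the hole of a checkers context (possibly capturing free variables). -/
def Ctx.fill : Ctx → Tm → Tm
  | .hole, s => s
  | .lam c x C, s => .lam c x (C.fill s)
  | .appL c C u, s => .app c (C.fill s) u
  | .appR c t C, s => .app c t (C.fill s)

/-- Interaction improvement ⊑imp on checkers terms. -/
def Imp (t u : Tm) : Prop :=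
  ∀ (C : Ctx) (k : ℕ), Evals (C.fill t) k → ∃ k' ≤ k, Evals (C.fill u) k'

/-- Polarized whiter-cheaper improvement ⊑pwc on checkers terms. -/
def PWC (t u : Tm) : Prop :=
  ∀ (Γ : Env) (L : LinTy) (k : ℕ), HasTy Γ k t (.lin L) →
    ∃ (Γ' : Env) (L' : LinTy) (k' d : ℕ),
      HasTy Γ' k' u (.lin L') ∧ WhiterP .pos d Γ' L' Γ L ∧ k' + d ≤ k
/-! ### Whitening of types -/

mutual
  /-- Number of black arrows in a linear type. -/
  def LinTy.blacks : LinTy → ℕ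
    | .atom _ => 0
    | .arr M c L => blacksM M + L.blacks + (if c = .black then 1 else 0)

  /-- Number of black arrows in a multi type. -/
  def blacksM : List LinTy → ℕ
    | [] => 0
    | L :: M => L.blacks + blacksM M
end

mutual
  theorem WhiterL.rfl' (p : Pol) : (L : LinTy) → WhiterL p 0 L L
    | .atom a => .atom p a
    | .arr M c L => .congr (k₁ := 0) (k₂ := 0) c (WhiterM.rfl' p.flip M) (WhiterL.rfl' p L)

  theorem WhiterM.rfl' (p : Pol) : (M : List LinTy) → WhiterM p 0 M M
    | [] => .nil p
    | L :: M => .cons (k := 0) (k' := 0) (WhiterL.rfl' p L) (WhiterM.rfl' p M)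
end

theorem WhiterL.of_eq {p : Pol} {k k' : ℕ} {L' L : LinTy} (h : WhiterL p k L' L) (e : k = k') :
    WhiterL p k' L' L := e ▸ h

theorem WhiterM.of_eq {p : Pol} {k k' : ℕ} {L' L : List LinTy} (h : WhiterM p k L' L)
    (e : k = k') : WhiterM p k' L' L := e ▸ h

mutual
  theorem WhiterL.trans' : (L₃ : LinTy) → ∀ {p : Pol} {a b : ℕ} {L₁ L₂ : LinTy},
      WhiterL p a L₁ L₂ → WhiterL p b L₂ L₃ → WhiterL p (a + b) L₁ L₃
    | .atom x, p, a, b, L₁, L₂, h₁, h₂ => by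
      cases h₂; exact h₁
    | .arr M c L, p, a, b, L₁, L₂, h₁, h₂ => by
      cases h₂ with
      | whiten hM hL =>
        cases h₁ with
        | congr _ hM' hL' =>
          exact (WhiterL.whiten (WhiterM.trans' M hM' hM) (WhiterL.trans' L hL' hL)).of_eq
            (by omega)
      | congr _ hM hL =>
        cases h₁ with
        | whiten hM' hL' =>
          exact (WhiterL.whiten (WhiterM.trans' M hM' hM) (WhiterL.trans' L hL' hL)).of_eq
            (by omega)
        | congr _ hM' hL' =>
          exact (WhiterL.congr c (WhiterM.trans' M hM' hM) (WhiterL.trans' L hL' hL)).of_eq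
            (by omega)

  theorem WhiterM.trans' : (M₃ : List LinTy) → ∀ {p : Pol} {a b : ℕ} {M₁ M₂ : List LinTy},
      WhiterM p a M₁ M₂ → WhiterM p b M₂ M₃ → WhiterM p (a + b) M₁ M₃
    | [], p, a, b, M₁, M₂, h₁, h₂ => by
      cases h₂; exact h₁
    | L :: M, p, a, b, M₁, M₂, h₁, h₂ => by
      cases h₂ with
      | cons hL hM =>
        cases h₁ with
        | cons hL' hM' =>
          exact (WhiterM.cons (WhiterL.trans' L hL' hL) (WhiterM.trans' M hM' hM)).of_eq
            (by omega)
end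

mutual
  /-- The cost of a whitening is the number of black arrows it removes. -/
  theorem WhiterL.blacks_eq : (L : LinTy) → ∀ {p : Pol} {a : ℕ} {L' : LinTy},
      WhiterL p a L' L → L'.blacks + a = L.blacks
    | .atom x, p, a, L', h => by
      cases h; rfl
    | .arr M c L, p, a, L', h => by
      cases h with
      | whiten hM hL =>
        have h₁ := WhiterM.blacks_eq M hM
        have h₂ := WhiterL.blacks_eq L hL
        simp [LinTy.blacks]; omega
      | congr _ hM hL =>
        have h₁ := WhiterM.blacks_eq M hM
        have h₂ := WhiterL.blacks_eq L hL
        simp only [LinTy.blacks]; omega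

  theorem WhiterM.blacks_eq : (M : List LinTy) → ∀ {p : Pol} {a : ℕ} {M' : List LinTy},
      WhiterM p a M' M → blacksM M' + a = blacksM M
    | [], p, a, M', h => by
      cases h; rfl
    | L :: M, p, a, M', h => by
      cases h with
      | cons hL hM =>
        have h₁ := WhiterM.blacks_eq M hM
        have h₂ := WhiterL.blacks_eq L hL
        simp only [blacksM]; omega
end

mutual
  theorem WhiterL.eq_of_zero : (L : LinTy) → ∀ {p : Pol} {a : ℕ} {L' : LinTy},
      WhiterL p a L' L → a = 0 → L' = L
    | .atom x, p, a, L', h, _ => by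
      cases h; rfl
    | .arr M c L, p, a, L', h, ha => by
      cases h with
      | whiten hM hL => omega
      | congr _ hM hL =>
        rw [WhiterM.eq_of_zero M hM (by omega), WhiterL.eq_of_zero L hL (by omega)]

  theorem WhiterM.eq_of_zero : (M : List LinTy) → ∀ {p : Pol} {a : ℕ} {M' : List LinTy},
      WhiterM p a M' M → a = 0 → M' = M
    | [], p, a, M', h, _ => by
      cases h; rfl
    | L :: M, p, a, M', h, ha => by
      cases h with
      | cons hL hM =>
        rw [WhiterM.eq_of_zero M hM (by omega), WhiterL.eq_of_zero L hL (by omega)]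
end

mutual
  /-- Whitenings of opposite polarities act on disjoint sets of arrows, so they commute, with
  unchanged costs. -/
  theorem WhiterL.diamond : (L : LinTy) → ∀ {a b : ℕ} {L₁ L₂ : LinTy},
      WhiterL .pos a L₁ L → WhiterL .neg b L₂ L →
      ∃ L₃, WhiterL .neg b L₃ L₁ ∧ WhiterL .pos a L₃ L₂
    | .atom x, a, b, L₁, L₂, h₁, h₂ => by
      cases h₁; cases h₂
      exact ⟨_, .atom _ _, .atom _ _⟩
    | .arr M c L, a, b, L₁, L₂, h₁, h₂ => by
      cases h₂ with
      | congr _ hM₂ hL₂ =>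
        cases h₁ with
        | whiten hM₁ hL₁ =>
          obtain ⟨L₃, hL, hL'⟩ := WhiterL.diamond L hL₁ hL₂
          obtain ⟨M₃, hM, hM'⟩ := WhiterM.diamond M hM₂ hM₁
          exact ⟨.arr M₃ .white L₃, .congr _ hM' hL, .whiten hM hL'⟩
        | congr _ hM₁ hL₁ =>
          obtain ⟨L₃, hL, hL'⟩ := WhiterL.diamond L hL₁ hL₂
          obtain ⟨M₃, hM, hM'⟩ := WhiterM.diamond M hM₂ hM₁
          exact ⟨.arr M₃ c L₃, .congr _ hM' hL, .congr _ hM hL'⟩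

  theorem WhiterM.diamond : (M : List LinTy) → ∀ {a b : ℕ} {M₁ M₂ : List LinTy},
      WhiterM .pos a M₁ M → WhiterM .neg b M₂ M →
      ∃ M₃, WhiterM .neg b M₃ M₁ ∧ WhiterM .pos a M₃ M₂
    | [], a, b, M₁, M₂, h₁, h₂ => by
      cases h₁; cases h₂
      exact ⟨_, .nil _, .nil _⟩
    | L :: M, a, b, M₁, M₂, h₁, h₂ => by
      cases h₁ with
      | cons hL₁ hM₁ =>
        cases h₂ with
        | cons hL₂ hM₂ =>
          obtain ⟨L₃, hL, hL'⟩ := WhiterL.diamond L hL₁ hL₂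
          obtain ⟨M₃, hM, hM'⟩ := WhiterM.diamond M hM₁ hM₂
          exact ⟨L₃ :: M₃, .cons hL hM, .cons hL' hM'⟩
end

theorem WhiterM.append {p : Pol} {a b : ℕ} {M' M N' N : List LinTy}
    (h₁ : WhiterM p a M' M) (h₂ : WhiterM p b N' N) : WhiterM p (a + b) (M' ++ N') (M ++ N) := by
  induction M generalizing a M' with
  | nil => cases h₁; simpa using h₂
  | cons L M ih =>
    cases h₁ with
    | cons hL hM => exact (WhiterM.cons hL (ih hM)).of_eq (by omega)

theorem WhiterM.split {p : Pol} {k : ℕ} {P M N : List LinTy} (h : WhiterM p k P (M ++ N)) :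
    ∃ M' N' a b, P = M' ++ N' ∧ k = a + b ∧ WhiterM p a M' M ∧ WhiterM p b N' N := by
  induction M generalizing k P with
  | nil => exact ⟨[], P, 0, k, rfl, by omega, .nil p, h⟩
  | cons L M ih =>
    cases h with
    | cons hL hM =>
      obtain ⟨M', N', a, b, rfl, rfl, h₁, h₂⟩ := ih hM
      exact ⟨_ :: M', N', _, b, rfl, (Nat.add_assoc _ a b).symm, .cons hL h₁, h₂⟩

/-! ### Whitening of environments -/

theorem sum_add_aux (f g : Var →₀ ℕ) :
    ((f + g).sum fun _ n => n) = (f.sum fun _ n => n) + g.sum fun _ n => n :=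
  Finsupp.sum_add_index' (fun _ => rfl) (fun _ _ _ => rfl)

theorem WhiterE.of_eq {p : Pol} {k k' : ℕ} {Γ' Γ : Env} (h : WhiterE p k Γ' Γ) (e : k = k') :
    WhiterE p k' Γ' Γ := e ▸ h

theorem WhiterE.rfl' (p : Pol) (Γ : Env) : WhiterE p 0 Γ Γ :=
  ⟨0, fun x => WhiterM.rfl' p (Γ x), by simp⟩

theorem WhiterE.trans' {p : Pol} {a b : ℕ} {Γ₁ Γ₂ Γ₃ : Env}
    (h₁ : WhiterE p a Γ₁ Γ₂) (h₂ : WhiterE p b Γ₂ Γ₃) : WhiterE p (a + b) Γ₁ Γ₃ := by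
  obtain ⟨f, hf, rfl⟩ := h₁
  obtain ⟨g, hg, rfl⟩ := h₂
  exact ⟨f + g, fun x => WhiterM.trans' _ (hf x) (hg x), (sum_add_aux f g).symm⟩

theorem WhiterE.union {p : Pol} {a b : ℕ} {Γ' Γ Δ' Δ : Env}
    (h₁ : WhiterE p a Γ' Γ) (h₂ : WhiterE p b Δ' Δ) :
    WhiterE p (a + b) (Env.union Γ' Δ') (Env.union Γ Δ) := by
  obtain ⟨f, hf, rfl⟩ := h₁
  obtain ⟨g, hg, rfl⟩ := h₂
  exact ⟨f + g, fun x => WhiterM.append (hf x) (hg x), (sum_add_aux f g).symm⟩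

theorem WhiterE.split {p : Pol} {k : ℕ} {Θ Γ Δ : Env} (h : WhiterE p k Θ (Env.union Γ Δ)) :
    ∃ Γ' Δ' a b, Θ = Env.union Γ' Δ' ∧ k = a + b ∧ WhiterE p a Γ' Γ ∧ WhiterE p b Δ' Δ := by
  obtain ⟨f, hf, rfl⟩ := h
  choose Γ' Δ' a b hΘ hab h₁ h₂ using fun x => WhiterM.split (hf x)
  let A : Var →₀ ℕ := Finsupp.onFinset f.support a
    (fun x hx => by rw [Finsupp.mem_support_iff, hab x]; omega)
  let B : Var →₀ ℕ := Finsupp.onFinset f.support b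
    (fun x hx => by rw [Finsupp.mem_support_iff, hab x]; omega)
  have hf' : f = A + B := Finsupp.ext hab
  exact ⟨Γ', Δ', _, _, funext hΘ, by rw [hf', sum_add_aux], ⟨A, h₁, rfl⟩, ⟨B, h₂, rfl⟩⟩

theorem WhiterE.empty {p : Pol} {k : ℕ} {Γ : Env} (h : WhiterE p k Γ Env.empty) :
    Γ = Env.empty ∧ k = 0 := by
  obtain ⟨f, hf, rfl⟩ := h
  have key : ∀ x, Γ x = [] ∧ f x = 0 := fun x => by
    have h := hf x
    simp only [Env.empty] at h
    generalize Γ x = P at h ⊢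
    generalize f x = n at h ⊢
    cases h; exact ⟨rfl, rfl⟩
  have h0 : f = 0 := Finsupp.ext fun x => (key x).2
  exact ⟨funext fun x => (key x).1, by simp [h0]⟩

/-- Adds a binding for a variable on which the whitened environment is empty. -/
theorem WhiterE.insert {p : Pol} {k a : ℕ} {Γ' Γ : Env} {x : Var} {M : MTy}
    (h : WhiterE p k Γ' (Env.update Γ x [])) (hM : WhiterM p a M (Γ x)) :
    WhiterE p (k + a) (Env.update Γ' x M) Γ ∧ Γ' x = [] := by
  obtain ⟨f, hf, rfl⟩ := h
  have hx : f x = 0 ∧ Γ' x = [] := by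
    have h := hf x
    simp only [Env.update, if_true] at h
    generalize Γ' x = P at h ⊢
    generalize f x = n at h ⊢
    cases h; exact ⟨rfl, rfl⟩
  refine ⟨⟨f + Finsupp.single x a, fun y => ?_, by rw [sum_add_aux]; simp⟩, hx.2⟩
  by_cases hy : y = x
  · subst hy
    simpa [Env.update, hx.1] using hM
  · simpa [Env.update, hy, Finsupp.single_apply, Ne.symm hy] using hf y

/-- Removes a binding, isolating the cost of whitening it. -/
theorem WhiterE.extract {p : Pol} {k : ℕ} {Γ' Γ : Env} {x : Var} {M : MTy}
    (h : WhiterE p k Γ' (Env.update Γ x M)) (hx : Γ x = []) :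
    ∃ a b, k = a + b ∧ WhiterE p a (Env.update Γ' x []) Γ ∧ WhiterM p b (Γ' x) M := by
  obtain ⟨f, hf, rfl⟩ := h
  refine ⟨_, f x, ?_, ⟨f.erase x, fun y => ?_, rfl⟩, by simpa [Env.update] using hf x⟩
  · conv_lhs => rw [← Finsupp.erase_add_single x f, sum_add_aux]
    simp
  · by_cases hy : y = x
    · subst hy
      simpa [Env.update, hx] using WhiterM.nil p
    · simpa [Env.update, hy] using hf y

theorem Env.update_empty_single (x : Var) (M : MTy) :
    Env.update Env.empty x M = Env.single x M := rfl

theorem Env.update_single_nil (x : Var) (M : MTy) :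
    Env.update (Env.single x M) x [] = Env.empty := by
  funext y; simp only [Env.update, Env.single, Env.empty]; split <;> rfl

theorem WhiterE.single {p : Pol} {k : ℕ} {M' M : MTy} (x : Var) (h : WhiterM p k M' M) :
    WhiterE p k (Env.single x M') (Env.single x M) := by
  have h₀ : WhiterE p 0 Env.empty (Env.update (Env.single x M) x []) := by
    rw [Env.update_single_nil]; exact WhiterE.rfl' p _
  have := (h₀.insert (M := M') (a := k) (by simpa [Env.single] using h)).1
  rw [Env.update_empty_single] at this
  exact this.of_eq (by omega)

theorem WhiterE.single_inv {p : Pol} {k : ℕ} {Γ : Env} {M : MTy} {x : Var}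
    (h : WhiterE p k Γ (Env.single x M)) :
    ∃ M', Γ = Env.single x M' ∧ WhiterM p k M' M := by
  rw [← Env.update_empty_single] at h
  obtain ⟨a, b, rfl, h₁, h₂⟩ := h.extract rfl
  obtain ⟨h₃, rfl⟩ := h₁.empty
  refine ⟨Γ x, funext fun y => ?_, h₂.of_eq (by omega)⟩
  have := congrFun h₃ y
  by_cases hy : y = x
  · subst hy; simp [Env.single]
  · simpa [Env.single, Env.update, Env.empty, hy] using this

/-! ### Repainting derivations -/

/-- Every derivation for `t` of a linear type absorbs a negative whitening of its final judgment,
at the price of a further positive whitening. The sum of interaction cost and whitening cost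
does not increase, and neither does the whitening cost alone. -/
def RepaintL (t : Tm) : Prop :=
  ∀ (Γ Γ₁ : Env) (L L₁ : LinTy) (k e a : ℕ), HasTy Γ k t (.lin L) →
    WhiterE .pos e Γ₁ Γ → WhiterL .neg a L₁ L →
    ∃ Γ₂ L₂ k' e' a', HasTy Γ₂ k' t (.lin L₂) ∧ WhiterE .neg e' Γ₂ Γ₁ ∧ WhiterL .pos a' L₂ L₁ ∧
      e' + a' ≤ e + a ∧ k' + (e' + a') ≤ k + (e + a)

/-- The analogue of `RepaintL` for derivations of multi types. -/
def RepaintM (t : Tm) : Prop :=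
  ∀ (Γ Γ₁ : Env) (M M₁ : MTy) (k e a : ℕ), HasTy Γ k t (.multi M) →
    WhiterE .pos e Γ₁ Γ → WhiterM .neg a M₁ M →
    ∃ Γ₂ M₂ k' e' a', HasTy Γ₂ k' t (.multi M₂) ∧ WhiterE .neg e' Γ₂ Γ₁ ∧ WhiterM .pos a' M₂ M₁ ∧
      e' + a' ≤ e + a ∧ k' + (e' + a') ≤ k + (e + a)

theorem RepaintL.multi {t : Tm} (ht : RepaintL t) : RepaintM t := by
  intro Γ Γ₁ M M₁ k e a h hΓ hM
  induction M generalizing Γ Γ₁ M₁ k e a with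
  | nil =>
    obtain ⟨s, h⟩ := h
    cases h
    cases hM
    obtain ⟨rfl, rfl⟩ := hΓ.empty
    exact ⟨_, [], 0, 0, 0, ⟨0, .many_nil t⟩, WhiterE.rfl' _ _, .nil _, by omega, by omega⟩
  | cons L M ih =>
    obtain ⟨s, h⟩ := h
    cases h with
    | many_cons h₁ h₂ =>
      cases hM with
      | cons hL hM =>
        obtain ⟨Γ', Δ', e₁, e₂, rfl, rfl, hΓ, hΔ⟩ := hΓ.split
        obtain ⟨Γ₂, L₂, k', e', a', ⟨s₁, t₁⟩, w₁, v₁, _, _⟩ := ht _ _ _ _ _ _ _ ⟨_, h₁⟩ hΓ hL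
        obtain ⟨Δ₂, M₂, l', f', b', ⟨s₂, t₂⟩, w₂, v₂, _, _⟩ := ih _ _ _ _ _ _ ⟨_, h₂⟩ hΔ hM
        exact ⟨_, _, _, _, _, ⟨_, .many_cons t₁ t₂⟩, w₁.union w₂, .cons v₁ v₂,
          by omega, by omega⟩

/-- Inversion of a positive whitening of an arrow type: whitening its root costs `r`, which pays
for the change of interaction cost of an application. -/
theorem WhiterL.arr_inv {a : ℕ} {M : MTy} {c : Color} {L L' : LinTy} (c₂ : Color)
    (h : WhiterL .pos a L' (.arr M c L)) :
    ∃ M' c' L₀ a₁ a₂ r, L' = .arr M' c' L₀ ∧ WhiterM .neg a₁ M' M ∧ WhiterL .pos a₂ L₀ L ∧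
      a = a₁ + a₂ + r ∧ costOf c' c₂ ≤ costOf c c₂ + r := by
  cases h with
  | whiten hM hL =>
    exact ⟨_, _, _, _, _, 1, rfl, hM, hL, rfl, by cases c₂ <;> simp [costOf]⟩
  | congr _ hM hL =>
    exact ⟨_, _, _, _, _, 0, rfl, hM, hL, rfl, le_rfl⟩

/-- Application repainting from repaintability of both subterms. The multi type `P` is the one
on which function and argument have to agree. Repainting the two derivations towards `P` yields a
positive whitening of `P` for the argument and a negative one for the function; if these are not
both trivial, they are joined into a new target with fewer black arrows. -/
theorem repaint_app {t u : Tm} (ht : RepaintL t) (hu : RepaintM u) (c₂ : Color) (n : ℕ) :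
    ∀ (P M N : MTy) (Γ Γ₁ Δ Δ₁ : Env) (L L₁ : LinTy) (c : Color) (k l a b e₁ e₂ e₃ : ℕ),
    blacksM P = n → HasTy Γ k t (.lin (.arr M c L)) → HasTy Δ l u (.multi N) →
    WhiterM .pos a P M → WhiterM .neg b P N →
    WhiterE .pos e₁ Γ₁ Γ → WhiterL .neg e₂ L₁ L → WhiterE .pos e₃ Δ₁ Δ →
    ∃ Γ' Δ' L' m f₁ f₂ f₃, HasTy (Env.union Γ' Δ') m (.app c₂ t u) (.lin L') ∧
      WhiterE .neg f₁ Γ' Γ₁ ∧ WhiterL .pos f₂ L' L₁ ∧ WhiterE .neg f₃ Δ' Δ₁ ∧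
      f₁ + f₂ + f₃ ≤ a + b + e₁ + e₂ + e₃ ∧
      m + (f₁ + f₂ + f₃) ≤ k + l + costOf c c₂ + (a + b + e₁ + e₂ + e₃) := by
  induction n using Nat.strong_induction_on with
  | _ n ih =>
    intro P M N Γ Γ₁ Δ Δ₁ L L₁ c k l a b e₁ e₂ e₃ hn h₁ h₂ hPM hPN hΓ hL hΔ
    obtain ⟨Γ₂, T, k', g₁, j, t₁, w₁, v₁, _, _⟩ := ht _ _ _ _ _ _ _ h₁ hΓ (.congr c hPM hL)
    obtain ⟨Δ₂, N₂, l', g₃, b', t₂, w₃, v₃, _, _⟩ := hu _ _ _ _ _ _ _ h₂ hΔ hPN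
    obtain ⟨M₂, c', L₂, a', g₂, r, rfl, vM, vL, rfl, hr⟩ := v₁.arr_inv c₂
    by_cases h0 : a' + b' = 0
    · obtain rfl := WhiterM.eq_of_zero _ vM (by omega)
      obtain rfl := WhiterM.eq_of_zero _ v₃ (by omega)
      obtain ⟨s₁, t₁⟩ := t₁
      obtain ⟨s₂, t₂⟩ := t₂
      exact ⟨_, _, _, _, _, _, _, ⟨_, .app c₂ t₁ t₂⟩, w₁, vL, w₃, by omega, by omega⟩
    · obtain ⟨Q, hQN, hQM⟩ := WhiterM.diamond _ v₃ vM
      have n₁ := WhiterM.blacks_eq _ vM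
      have n₂ := WhiterM.blacks_eq _ hQM
      obtain ⟨Γ', Δ', L', m, f₁, f₂, f₃, tt, x₁, x₂, x₃, _, _⟩ :=
        ih (blacksM Q) (by omega) Q M₂ N₂ Γ₂ Γ₂ Δ₂ Δ₂ L₂ L₂ c' k' l' b' a' 0 0 0 rfl t₁ t₂
          hQM hQN (WhiterE.rfl' _ _) (WhiterL.rfl' _ _) (WhiterE.rfl' _ _)
      exact ⟨Γ', Δ', L', m, _, _, _, tt, x₁.trans' w₁, WhiterL.trans' _ x₂ vL, x₃.trans' w₃,
        by omega, by omega⟩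

theorem repaintL (t : Tm) : RepaintL t := by
  induction t with
  | var x =>
    intro Γ Γ₁ L L₁ k e a h hΓ hL
    obtain ⟨s, h⟩ := h
    cases h
    obtain ⟨M', rfl, hM⟩ := hΓ.single_inv
    cases hM with
    | cons hL' hn =>
      cases hn
      -- the type of the variable must be whitened at both its positive and negative arrows
      obtain ⟨L₃, h₁, h₂⟩ := WhiterL.diamond _ hL' hL
      exact ⟨_, L₃, 0, _, _, ⟨0, .ax x L₃⟩, WhiterE.single x (.cons h₁ (.nil _)), h₂,
        by omega, by omega⟩
  | lam c x t ih =>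
    intro Γ Γ₁ L L₁ k e a h hΓ hL
    obtain ⟨s, h⟩ := h
    cases h with
    | lam _ _ h =>
      cases hL with
      | congr _ hM hL =>
        obtain ⟨hE, hx⟩ := hΓ.insert hM
        obtain ⟨Γ₂, L₂, k', e', a', ⟨s', t'⟩, w, v, _, _⟩ := ih _ _ _ _ _ _ _ ⟨_, h⟩ hE hL
        obtain ⟨p, q, rfl, w₁, w₂⟩ := w.extract hx
        exact ⟨_, _, k', _, _, ⟨_, .lam c x t'⟩, w₁, .congr c w₂ v, by omega, by omega⟩
  | app c t u iht ihu =>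
    intro Γ Γ₁ L L₁ k e a h hΓ hL
    obtain ⟨s, h⟩ := h
    cases h with
    | app _ h₁ h₂ =>
      obtain ⟨Γ', Δ', e₁, e₂, rfl, rfl, hΓ, hΔ⟩ := hΓ.split
      obtain ⟨Γ₂, Δ₂, L₂, m, f₁, f₂, f₃, tt, x₁, x₂, x₃, _, _⟩ :=
        repaint_app iht ihu.multi c _ _ _ _ _ _ _ _ _ _ _ _ _ _ _ _ _ _ rfl ⟨_, h₁⟩ ⟨_, h₂⟩
          (WhiterM.rfl' _ _) (WhiterM.rfl' _ _) hΓ hL hΔ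
      exact ⟨_, L₂, m, _, _, tt, x₁.union x₃, x₂, by omega, by omega⟩

/-- Application repainting. -/
theorem application_repainting (t u : Tm) (Γ Δ : Env) (k l d : ℕ)
    (M N : MTy) (c c₂ : Color) (L : LinTy)
    (h1 : HasTy Γ k t (.lin (.arr M c L)))
    (h2 : HasTy Δ l u (.multi N))
    (h3 : WhiterM .neg d M N ∨ WhiterM .pos d N M) :
    ∃ (Γ' Δ' : Env) (L' : LinTy) (m d' : ℕ), d' ≤ d ∧
      HasTy (Env.union Γ' Δ') m (.app c₂ t u) (.lin L') ∧
      WhiterP .pos d' (Env.union Γ' Δ') L' (Env.union Γ Δ) L ∧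
      m ≤ k + l + costOf c c₂ + d - d' := by
  have key : ∃ P a b, a + b = d ∧ WhiterM .pos a P M ∧ WhiterM .neg b P N := by
    rcases h3 with h | h
    · exact ⟨M, 0, d, by omega, WhiterM.rfl' _ _, h⟩
    · exact ⟨N, d, 0, by omega, h, WhiterM.rfl' _ _⟩
  obtain ⟨P, a, b, rfl, hPM, hPN⟩ := key
  obtain ⟨Γ', Δ', L', m, f₁, f₂, f₃, tt, x₁, x₂, x₃, _, _⟩ :=
    repaint_app (repaintL t) (repaintL u).multi c₂ _ P M N Γ Γ Δ Δ L L c k l a b 0 0 0 rfl h1 h2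
      hPM hPN (WhiterE.rfl' _ _) (WhiterL.rfl' _ _) (WhiterE.rfl' _ _)
  exact ⟨Γ', Δ', L', m, f₁ + f₃ + f₂, by omega, tt, ⟨f₁ + f₃, f₂, rfl, x₁.union x₃, x₂⟩,
    by omega⟩
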